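/- Let k be an algebraically closed field and r ≥ 2 an integer. The Zariski closed set {(F_1,F_2) ∈ W_{r,2} × W_{r,2} : dim V(F_1,F_2) ≥ r−1} has exactly two irreducible components: the set A of pairs of quadratic forms sharing a common nonzero linear factor, and the set B of pairs of quadratic forms that are linearly dependent over k. -/

import Mathlib

open MvPolynomial

noncomputable section

variable (K : Type*) [Field K] (M : Type*) [AddCommGroup M] [Module K M]

/-- Evaluation of a polynomial in the linear functionals of `M` at a point `v : M`.
These are precisely the polynomial functions on the affine space `M`. -/
def polyEval (p : MvPolynomial (M →ₗ[K] K) K) (v : M) : K :=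
  MvPolynomial.eval (fun φ : M →ₗ[K] K => φ v) p

lemma polyEval_mul (p q : MvPolynomial (M →ₗ[K] K) K) (v : M) :
    polyEval K M (p * q) v = polyEval K M p v * polyEval K M q v :=
  map_mul (MvPolynomial.eval fun φ : M →ₗ[K] K => φ v) p q

/-- The collection of Zariski-closed subsets of the affine space `M`:
common zero loci of families of polynomial functions. -/
def zariskiCloseds : Set (Set M) :=
  {s | ∃ S : Set (MvPolynomial (M →ₗ[K] K) K), s = {v | ∀ p ∈ S, polyEval K M p v = 0}}

/-- The Zariski topology on an affine space (vector space) `M` over `K`. -/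
def zariskiTopology : TopologicalSpace M := by
  refine TopologicalSpace.ofClosed (zariskiCloseds K M) ⟨{1}, ?_⟩ ?_ ?_
  · ext v
    simp [polyEval]
  · intro A hA
    choose S hS using fun a : A => hA a.2
    refine ⟨⋃ a : A, S a, ?_⟩
    ext v
    simp only [Set.mem_sInter, Set.mem_setOf_eq, Set.mem_iUnion]
    constructor
    · rintro h p ⟨a, hp⟩
      have := h a a.2
      rw [hS a] at this
      exact this p hp
    · intro h t ht
      have : v ∈ {w | ∀ p ∈ S ⟨t, ht⟩, polyEval K M p w = 0} :=
        fun p hp => h p ⟨⟨t, ht⟩, hp⟩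
      rw [← hS ⟨t, ht⟩] at this
      exact this
  · rintro s ⟨S₁, rfl⟩ t ⟨S₂, rfl⟩
    refine ⟨Set.image2 (· * ·) S₁ S₂, ?_⟩
    ext v
    simp only [Set.mem_union, Set.mem_setOf_eq]
    constructor
    · rintro (h | h) p ⟨p₁, h₁, p₂, h₂, rfl⟩
      · show polyEval K M (p₁ * p₂) v = 0
        rw [polyEval_mul, h p₁ h₁, zero_mul]
      · show polyEval K M (p₁ * p₂) v = 0
        rw [polyEval_mul, h p₂ h₂, mul_zero]
    · intro h
      by_contra hc
      push_neg at hc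
      obtain ⟨⟨p₁, h₁, hv₁⟩, ⟨p₂, h₂, hv₂⟩⟩ := hc
      have h12 := h (p₁ * p₂) ⟨p₁, h₁, p₂, h₂, rfl⟩
      rw [polyEval_mul] at h12
      exact mul_ne_zero hv₁ hv₂ h12

/-- The dimension of a subset of affine space: the Krull dimension of its Zariski closure. -/
def dimSet {M : Type*} [TopologicalSpace M] (s : Set M) : WithBot ℕ∞ :=
  topologicalKrullDim ↥(closure s)

/-- `vdimGE r n F m` says that the common projective vanishing locus
`V(F 0, …, F (n-1)) ⊆ ℙ^r` has dimension at least `m` (with `dim ∅ = -∞`).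
This is encoded via the Krull dimension of the homogeneous coordinate ring of the
affine cone: `dim V(F) ≥ m` iff the cone has Krull dimension at least `max m 0 + 1`. -/
def vdimGE {K : Type*} [Field K] (r n : ℕ) (F : Fin n → MvPolynomial (Fin (r + 1)) K)
    (m : ℤ) : Prop :=
  ((m.toNat + 1 : ℕ) : WithBot ℕ∞) ≤
    ringKrullDim (MvPolynomial (Fin (r + 1)) K ⧸ Ideal.span (Set.range F))

end

noncomputable section Statement14

open MvPolynomial

variable (K : Type*) [Field K]

/-- The affine space `W_{r,2} × W_{r,2}` of pairs of quadratic forms in `x_0, …, x_r`. -/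
abbrev pairSpace (r : ℕ) : Type _ :=
  ↥(homogeneousSubmodule (Fin (r + 1)) K 2) × ↥(homogeneousSubmodule (Fin (r + 1)) K 2)

/-- The Zariski topology on the affine space of pairs of quadratic forms. -/
instance (r : ℕ) : TopologicalSpace (pairSpace K r) := zariskiTopology K _

/-!
The locus `A ∪ B` consists of the pairs of quadratic forms that are not coprime: a nontrivial
common factor of two quadrics is homogeneous, hence either linear or a quadric to which both forms
are proportional. Dividing out coprime `F` and `G` drops the Krull dimension of the polynomial ring
by two, while a common factor `D` vanishing at the origin leaves dimension at least `r`, because the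
ideal of the origin has height `r + 1`. Hence `dim V(F, G) ≥ r - 1` means that `F` and `G` are not
coprime.

Forms of the same degree fail to be coprime exactly when they admit a nonzero syzygy
`L * F + M * G = 0` with `L` and `M` of smaller degree, and this non-injectivity of a linear map
depending linearly on `(F, G)` is a determinantal, hence closed, condition. Inside `A ∪ B` the set
`A` is cut out by requiring `F` and `G` to be products of linear forms, which is the vanishing of
all ternary half-discriminants in every characteristic.

Both `A` and `B` are images of bilinear maps, so any two of their points are joined by a polynomial
curve inside them, and they are irreducible.
-/

section ZariskiTopology

open scoped Topology

variable {K} {M N P : Type*} [AddCommGroup M] [Module K M] [AddCommGroup N] [Module K N]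
  [AddCommGroup P] [Module K P]

variable (K M) in
/-- The algebra of regular functions on the affine space `M`: the functions which are polynomials
in linear functionals. -/
def regularFunctions : Subalgebra K (M → K) :=
  Algebra.adjoin K (Set.range fun φ : M →ₗ[K] K => ⇑φ)

lemma coe_linearMap_mem_regularFunctions (φ : M →ₗ[K] K) : ⇑φ ∈ regularFunctions K M :=
  Algebra.subset_adjoin ⟨φ, rfl⟩

lemma mem_regularFunctions_iff {f : M → K} :
    f ∈ regularFunctions K M ↔ ∃ p, polyEval K M p = f := by
  rw [regularFunctions, Algebra.adjoin_range_eq_range_aeval, AlgHom.mem_range]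
  refine exists_congr fun p => ?_
  suffices aeval (fun φ : M →ₗ[K] K => ⇑φ) p = polyEval K M p by rw [this]
  funext v
  exact (map_aeval _ (Pi.evalRingHom (fun _ : M => K) v) p).trans rfl

lemma isClosed_zariski_iff {s : Set M} :
    IsClosed[zariskiTopology K M] s ↔
      ∃ S ⊆ (regularFunctions K M : Set (M → K)), s = {v | ∀ f ∈ S, f v = 0} := by
  have h : IsClosed[zariskiTopology K M] s ↔ s ∈ zariskiCloseds K M := by
    rw [← @isOpen_compl_iff M s (zariskiTopology K M)]
    change sᶜᶜ ∈ _ ↔ _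
    rw [compl_compl]
  rw [h]
  constructor
  · rintro ⟨S, rfl⟩
    exact ⟨polyEval K M '' S, by rintro _ ⟨p, -, rfl⟩; exact mem_regularFunctions_iff.2 ⟨p, rfl⟩,
      by simp only [Set.forall_mem_image]⟩
  · rintro ⟨S, hS, rfl⟩
    refine ⟨polyEval K M ⁻¹' S, Set.ext fun v => ⟨fun hv p hp => hv _ hp, fun hv f hf => ?_⟩⟩
    obtain ⟨p, rfl⟩ := mem_regularFunctions_iff.1 (hS hf)
    exact hv p hf

lemma isClosed_zariski_setOf_forall_eq_zero {ι : Sort*} {f : ι → M → K}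
    (hf : ∀ i, f i ∈ regularFunctions K M) :
    IsClosed[zariskiTopology K M] {v | ∀ i, f i v = 0} :=
  isClosed_zariski_iff.2
    ⟨Set.range f, Set.range_subset_iff.2 hf, by simp only [Set.forall_mem_range]⟩

lemma exists_regularFunctions_ne_zero_of_mem_isOpen {U : Set M}
    (hU : IsOpen[zariskiTopology K M] U) {x : M} (hx : x ∈ U) :
    ∃ f ∈ regularFunctions K M, f x ≠ 0 ∧ ∀ y, f y ≠ 0 → y ∈ U := by
  obtain ⟨S, hS, hUS⟩ :=
    isClosed_zariski_iff.1 ((@isClosed_compl_iff M (zariskiTopology K M) U).2 hU)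
  have mem_iff : ∀ y, y ∈ U ↔ ∃ f ∈ S, f y ≠ 0 := fun y => by
    simpa using not_congr (Set.ext_iff.1 hUS y)
  obtain ⟨f, hf, hfx⟩ := (mem_iff x).1 hx
  exact ⟨f, hS hf, hfx, fun y hy => (mem_iff y).2 ⟨f, hf, hy⟩⟩

lemma regularFunctions_comp_linearMap (T : M →ₗ[K] N) {f : N → K}
    (hf : f ∈ regularFunctions K N) : f ∘ T ∈ regularFunctions K M := by
  induction hf using Algebra.adjoin_induction with
  | mem f hf =>
    obtain ⟨φ, rfl⟩ := hf
    exact coe_linearMap_mem_regularFunctions (φ ∘ₗ T)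
  | algebraMap c => exact (regularFunctions K M).algebraMap_mem c
  | add f g _ _ hf hg => exact add_mem hf hg
  | mul f g _ _ hf hg => exact mul_mem hf hg

lemma isClosed_zariski_preimage_linearMap (T : M →ₗ[K] N) {s : Set N}
    (hs : IsClosed[zariskiTopology K N] s) : IsClosed[zariskiTopology K M] (T ⁻¹' s) := by
  obtain ⟨S, hS, rfl⟩ := isClosed_zariski_iff.1 hs
  convert! isClosed_zariski_setOf_forall_eq_zero
    fun f : S => regularFunctions_comp_linearMap T (hS f.2) using 1
  exact Set.ext fun v => ⟨fun h f => h f f.2, fun h f hf => h ⟨f, hf⟩⟩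

/-- A map `K → M` is a polynomial curve if all its linear coordinates are polynomial functions. -/
def IsPolynomialCurve (γ : K → M) : Prop :=
  ∀ φ : M →ₗ[K] K, ∃ p : Polynomial K, ∀ t, φ (γ t) = p.eval t

lemma IsPolynomialCurve.exists_eval_eq {γ : K → M} (hγ : IsPolynomialCurve γ) {f : M → K}
    (hf : f ∈ regularFunctions K M) : ∃ p : Polynomial K, ∀ t, f (γ t) = p.eval t := by
  induction hf using Algebra.adjoin_induction with
  | mem f hf =>
    obtain ⟨φ, rfl⟩ := hf
    exact hγ φ
  | algebraMap c => exact ⟨.C c, fun t => by simp⟩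
  | add f g _ _ hf hg =>
    obtain ⟨p, hp⟩ := hf
    obtain ⟨q, hq⟩ := hg
    exact ⟨p + q, fun t => by simp [hp, hq]⟩
  | mul f g _ _ hf hg =>
    obtain ⟨p, hp⟩ := hf
    obtain ⟨q, hq⟩ := hg
    exact ⟨p * q, fun t => by simp [hp, hq]⟩

lemma isPreirreducible_zariski_of_isPolynomialCurve [Infinite K] {S : Set M}
    (h : ∀ x ∈ S, ∀ y ∈ S, ∃ γ : K → M, IsPolynomialCurve γ ∧ γ 0 = x ∧ γ 1 = y ∧ ∀ t, γ t ∈ S) :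
    @IsPreirreducible M (zariskiTopology K M) S := by
  rintro U V hU hV ⟨x, hxS, hxU⟩ ⟨y, hyS, hyV⟩
  obtain ⟨f, hf, hfx, hfU⟩ := exists_regularFunctions_ne_zero_of_mem_isOpen hU hxU
  obtain ⟨g, hg, hgy, hgV⟩ := exists_regularFunctions_ne_zero_of_mem_isOpen hV hyV
  obtain ⟨γ, hγ, rfl, rfl, hγS⟩ := h x hxS y hyS
  obtain ⟨p, hp⟩ := hγ.exists_eval_eq hf
  obtain ⟨q, hq⟩ := hγ.exists_eval_eq hg
  have hpq : p * q ≠ 0 := mul_ne_zero (by rintro rfl; simp [hp] at hfx)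
    (by rintro rfl; simp [hq] at hgy)
  obtain ⟨t, ht⟩ : ∃ t, (p * q).eval t ≠ 0 := by
    contrapose! hpq
    exact Polynomial.funext (by simpa using hpq)
  rw [Polynomial.eval_mul, ← hp, ← hq] at ht
  exact ⟨γ t, hγS t, hfU _ (left_ne_zero_of_mul ht), hgV _ (right_ne_zero_of_mul ht)⟩

lemma isIrreducible_zariski_range_bilinear [Infinite K] (β : M →ₗ[K] N →ₗ[K] P) :
    @IsIrreducible P (zariskiTopology K P) (Set.range fun x : M × N => β x.1 x.2) := by
  refine ⟨⟨0, 0, by simp⟩, isPreirreducible_zariski_of_isPolynomialCurve ?_⟩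
  rintro _ ⟨⟨x, y⟩, rfl⟩ _ ⟨⟨x', y'⟩, rfl⟩
  refine ⟨fun t => β (x + t • (x' - x)) (y + t • (y' - y)), fun φ => ?_, by simp, by simp,
    fun t => ⟨(x + t • (x' - x), y + t • (y' - y)), rfl⟩⟩
  refine ⟨.C (φ (β x y)) + .X * .C (φ (β (x' - x) y) + φ (β x (y' - y))) +
    .X ^ 2 * .C (φ (β (x' - x) (y' - y))), fun t => ?_⟩
  simp only [map_add, map_smul, LinearMap.add_apply, LinearMap.smul_apply, smul_eq_mul,
    Polynomial.eval_add, Polynomial.eval_mul, Polynomial.eval_pow, Polynomial.eval_X,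
    Polynomial.eval_C]
  ring

lemma exists_det_ne_zero_iff_linearIndependent {ι : Type*} [Fintype ι] [DecidableEq ι]
    {w : ι → P} :
    (∃ φ : ι → P →ₗ[K] K, (Matrix.of fun i j => φ j (w i)).det ≠ 0) ↔
      LinearIndependent K w := by
  constructor
  · rintro ⟨φ, hφ⟩
    refine .of_comp (LinearMap.pi φ) ?_
    exact Matrix.linearIndependent_rows_of_det_ne_zero hφ
  · intro hw
    obtain ⟨g, hg⟩ := LinearMap.exists_leftInverse_of_injective
      (Finsupp.linearCombination K w) (LinearMap.ker_eq_bot.2 hw)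
    have hgw : ∀ i, g (w i) = Finsupp.single i 1 := fun i => by
      simpa using LinearMap.congr_fun hg (Finsupp.single i 1)
    refine ⟨fun j => Finsupp.lapply j ∘ₗ g, ?_⟩
    suffices (Matrix.of fun i j => (Finsupp.lapply j ∘ₗ g) (w i)) = (1 : Matrix ι ι K) by
      rw [this, Matrix.det_one]
      exact one_ne_zero
    ext i j
    simp [hgw, Finsupp.single_apply, Matrix.one_apply]

lemma det_mem_regularFunctions {ι : Type*} [Fintype ι] [DecidableEq ι]
    {A : M → Matrix ι ι K} (hA : ∀ i j, (fun x => A x i j) ∈ regularFunctions K M) :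
    (fun x => (A x).det) ∈ regularFunctions K M := by
  let A' : Matrix ι ι (regularFunctions K M) := Matrix.of fun i j => ⟨_, hA i j⟩
  have hA' : (A'.det : M → K) = fun x => (A x).det := funext fun x =>
    RingHom.map_det ((Pi.evalRingHom (fun _ : M => K) x).comp (regularFunctions K M).subtype) A'
  exact hA' ▸ A'.det.2

lemma isClosed_zariski_setOf_not_linearIndependent {ι : Type*} [Finite ι]
    (v : ι → M →ₗ[K] P) :
    IsClosed[zariskiTopology K M] {x | ¬ LinearIndependent K fun i => v i x} := by
  classical
  have := Fintype.ofFinite ι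
  simp only [← exists_det_ne_zero_iff_linearIndependent, not_exists, not_not]
  exact isClosed_zariski_setOf_forall_eq_zero fun φ : ι → P →ₗ[K] K =>
    det_mem_regularFunctions fun i j => coe_linearMap_mem_regularFunctions (φ j ∘ₗ v i)

lemma isClosed_zariski_setOf_not_injective [Module.Finite K N] (T : M →ₗ[K] N →ₗ[K] P) :
    IsClosed[zariskiTopology K M] {x | ¬ Function.Injective (T x)} := by
  let b := Module.finBasis K N
  have injective_iff : ∀ x, Function.Injective (T x) ↔
      LinearIndependent K fun i => T.flip (b i) x := fun x =>
    ⟨fun h => b.linearIndependent.map' (T x) (LinearMap.ker_eq_bot.2 h),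
      fun h => LinearMap.injective_of_linearIndependent b.span_eq h⟩
  simp only [injective_iff]
  exact isClosed_zariski_setOf_not_linearIndependent fun i => T.flip (b i)

end ZariskiTopology

section Topology

variable {X : Type*} [TopologicalSpace X]

lemma setOf_maximal_isIrreducible_union_eq_pair {A B : Set X} (hA : IsClosed A) (hB : IsClosed B)
    (hA' : IsIrreducible A) (hB' : IsIrreducible B) (hAB : ¬ A ⊆ B) (hBA : ¬ B ⊆ A) :
    {C | Maximal (fun t => t ⊆ A ∪ B ∧ IsIrreducible t) C} = {A, B} := by
  have subset_or : ∀ t, t ⊆ A ∪ B → IsIrreducible t → t ⊆ A ∨ t ⊆ B := fun t ht hirr =>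
    isPreirreducible_iff_isClosed_union_isClosed.1 hirr.2 A B hA hB ht
  ext C
  constructor
  · rintro ⟨⟨hC, hirr⟩, hmax⟩
    rcases subset_or C hC hirr with h | h
    · exact .inl (h.antisymm (hmax ⟨Set.subset_union_left, hA'⟩ h))
    · exact .inr (h.antisymm (hmax ⟨Set.subset_union_right, hB'⟩ h))
  · rintro (rfl | rfl)
    · refine ⟨⟨Set.subset_union_left, hA'⟩, fun t ⟨ht, hirr⟩ hle => ?_⟩
      exact (subset_or t ht hirr).resolve_right fun h => hAB (hle.trans h)
    · refine ⟨⟨Set.subset_union_right, hB'⟩, fun t ⟨ht, hirr⟩ hle => ?_⟩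
      exact (subset_or t ht hirr).resolve_left fun h => hBA (hle.trans h)

end Topology

section QuadraticForm

open QuadraticMap

/-- The half-discriminant of a quadratic form `f` on the span of `u`, `v`, `w`. The Gram
determinant of the polar form at `u`, `v`, `w` is twice this polynomial; halving it keeps the
invariant meaningful in characteristic two. -/
def halfDiscr {V R : Type*} [AddCommGroup V] [CommRing R] (f : V → R) (u v w : V) : R :=
  4 * f u * f v * f w + polar f v w * polar f u w * polar f u v -
    f u * polar f v w ^ 2 - f v * polar f u w ^ 2 - f w * polar f u v ^ 2

lemma map_halfDiscr {V R S : Type*} [AddCommGroup V] [CommRing R] [CommRing S] (φ : R →+* S)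
    (f : V → R) (u v w : V) : φ (halfDiscr f u v w) = halfDiscr (φ ∘ f) u v w := by
  simp only [halfDiscr, polar, Function.comp_apply, map_sub, map_add, map_mul, map_pow, map_ofNat]

lemma halfDiscr_linMulLin {V R : Type*} [AddCommGroup V] [CommRing R] [Module R V]
    (l m : V →ₗ[R] R) (u v w : V) : halfDiscr (linMulLin l m) u v w = 0 := by
  simp only [halfDiscr, polar, linMulLin_apply, map_add]
  ring

variable {K} {V : Type*} [AddCommGroup V] [Module K V] {Q : QuadraticForm K V}

lemma quadraticForm_map_smul_add (Q : QuadraticForm K V) (t : K) (u v : V) :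
    Q (t • u + v) = Q u * t ^ 2 + polar Q u v * t + Q v := by
  rw [QuadraticMap.map_add Q, QuadraticMap.map_smul, polar_smul_left, smul_eq_mul, smul_eq_mul]
  ring

lemma eq_linMulLin_of_polar_ne_zero {u v : V} (hu : Q u = 0) (hv : Q v = 0)
    (huv : polar Q u v ≠ 0) (h : ∀ x, halfDiscr Q u v x = 0) :
    Q = linMulLin (polarBilin Q u) ((polar Q u v)⁻¹ • polarBilin Q v) := by
  ext x
  have hx := h x
  simp only [halfDiscr, hu, hv] at hx
  simp only [linMulLin_apply, polarBilin_apply_apply, LinearMap.smul_apply, smul_eq_mul]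
  field_simp
  apply mul_left_cancel₀ huv
  linear_combination -hx

lemma exists_isotropic_polar_ne_zero [IsAlgClosed K] {u v : V}
    (huv : polar Q u v ^ 2 ≠ 4 * Q u * Q v) :
    ∃ x y, Q x = 0 ∧ Q y = 0 ∧ polar Q x y ≠ 0 := by
  by_cases hu : Q u = 0
  · have hp : polar Q u v ≠ 0 := by
      rintro hp
      simp [hp, hu] at huv
    refine ⟨u, (-Q v / polar Q u v) • u + v, hu, ?_, ?_⟩
    · rw [quadraticForm_map_smul_add, hu]
      field_simp
      ring
    · simpa [polar_add_right, polar_smul_right, polar_self, hu] using hp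
  · obtain ⟨t, ht⟩ : ∃ t : K, Q u * t ^ 2 + polar Q u v * t + Q v = 0 := by
      obtain ⟨t, ht⟩ := IsAlgClosed.exists_root (.C (Q u) * .X ^ 2 + .C (polar Q u v) * .X +
        .C (Q v) : Polynomial K) (by rw [Polynomial.degree_quadratic hu]; decide)
      exact ⟨t, by simpa [Polynomial.IsRoot] using ht⟩
    obtain ⟨s, hs⟩ : ∃ s, Q u * (s + t) = -polar Q u v :=
      ⟨-polar Q u v / Q u - t, by field_simp; ring⟩
    refine ⟨t • u + v, s • u + v, by rw [quadraticForm_map_smul_add, ht], ?_, fun h => huv ?_⟩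
    · rw [quadraticForm_map_smul_add]
      linear_combination ht + (s - t) * hs
    · simp only [polar_add_left, polar_add_right, polar_smul_left, polar_smul_right, polar_self,
        polar_comm Q v u, smul_eq_mul] at h
      have hs' : polar Q u v = -(Q u * (s + t)) := by rw [hs, neg_neg]
      rw [hs'] at h ht ⊢
      linear_combination -Q u * h - 2 * Q u * ht

lemma exists_linear_sq_eq_of_polar_eq_zero [CharP K 2] [PerfectRing K 2]
    (h : ∀ u v, polar Q u v = 0) :
    ∃ l : V →ₗ[K] K, ∀ x, l x ^ 2 = Q x := by
  have hroot : ∀ c : K, (frobeniusEquiv K 2).symm c ^ 2 = c := frobeniusEquiv_symm_pow_p K 2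
  refine ⟨{ toFun := fun x => (frobeniusEquiv K 2).symm (Q x), map_add' := ?_, map_smul' := ?_ },
    fun x => hroot _⟩
  · intro x y
    rw [QuadraticMap.map_add Q, h, add_zero, _root_.map_add]
  · intro c x
    rw [RingEquiv.symm_apply_eq, frobeniusEquiv_apply, frobenius_def, RingHom.id_apply, smul_eq_mul,
      mul_pow, hroot, QuadraticMap.map_smul, smul_eq_mul, pow_two]

lemma exists_eq_linMulLin_of_polar_sq_eq [IsAlgClosed K]
    (h : ∀ u v, polar Q u v ^ 2 = 4 * Q u * Q v) : ∃ l m : V →ₗ[K] K, Q = linMulLin l m := by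
  by_cases h2 : (2 : K) = 0
  · have : CharP K 2 := CharTwo.of_one_ne_zero_of_two_eq_zero one_ne_zero h2
    obtain ⟨l, hl⟩ := exists_linear_sq_eq_of_polar_eq_zero (Q := Q) fun u v => by
      have h4 : (4 : K) = 0 := by linear_combination (2 : K) * h2
      simpa [h4] using h u v
    exact ⟨l, l, by ext x; rw [linMulLin_apply, ← hl, pow_two]⟩
  · by_cases hQ : Q = 0
    · exact ⟨0, 0, by ext x; simp [hQ]⟩
    obtain ⟨e, he⟩ : ∃ e, Q e ≠ 0 := by
      contrapose! hQ
      exact QuadraticMap.ext hQ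
    have h4 : (4 : K) ≠ 0 := by
      rw [show (4 : K) = 2 * 2 by norm_num]
      exact mul_ne_zero h2 h2
    refine ⟨polarBilin Q e, (4 * Q e)⁻¹ • polarBilin Q e, ?_⟩
    ext x
    simp only [linMulLin_apply, polarBilin_apply_apply, LinearMap.smul_apply, smul_eq_mul]
    field_simp
    rw [h e x]
    ring

theorem forall_halfDiscr_eq_zero_iff [IsAlgClosed K] :
    (∀ u v w, halfDiscr Q u v w = 0) ↔ ∃ l m : V →ₗ[K] K, Q = linMulLin l m := by
  refine ⟨fun h => ?_, ?_⟩
  · by_cases hpolar : ∀ u v, polar Q u v ^ 2 = 4 * Q u * Q v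
    · exact exists_eq_linMulLin_of_polar_sq_eq hpolar
    · push Not at hpolar
      obtain ⟨u, v, huv⟩ := hpolar
      obtain ⟨x, y, hx, hy, hxy⟩ := exists_isotropic_polar_ne_zero huv
      exact ⟨_, _, eq_linMulLin_of_polar_ne_zero hx hy hxy (h x y)⟩
  · rintro ⟨l, m, rfl⟩ u v w
    exact halfDiscr_linMulLin l m u v w

end QuadraticForm

section HomogeneousDivisor

variable {σ R : Type*}

lemma isHomogeneous_totalDegree_of_totalDegree_le_order [CommSemiring R] {p : MvPolynomial σ R}
    (hp : p.totalDegree ≤ (p : MvPowerSeries σ R).order) : p.IsHomogeneous p.totalDegree := by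
  intro d hd
  rw [Pi.one_def, ← Finsupp.degree_eq_weight_one]
  refine le_antisymm (le_totalDegree (mem_support_iff.2 hd)) ?_
  exact_mod_cast hp.trans (MvPowerSeries.order_le (by rwa [coeff_coe]))

lemma order_le_totalDegree [CommSemiring R] {p : MvPolynomial σ R} (hp : p ≠ 0) :
    (p : MvPowerSeries σ R).order ≤ p.totalDegree := by
  obtain ⟨d, hd⟩ := ne_zero_iff.1 hp
  calc (p : MvPowerSeries σ R).order ≤ d.degree := MvPowerSeries.order_le (by rwa [coeff_coe])
    _ ≤ p.totalDegree := by exact_mod_cast le_totalDegree (mem_support_iff.2 hd)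

lemma le_order_of_isHomogeneous [CommSemiring R] {p : MvPolynomial σ R} {n : ℕ}
    (hp : p.IsHomogeneous n) : n ≤ (p : MvPowerSeries σ R).order :=
  MvPowerSeries.nat_le_order fun d hd => by
    rw [coeff_coe, hp.coeff_eq_zero hd.ne]

variable [CommRing R] [IsDomain R]

/- The order of a nonzero polynomial is at most its total degree, with equality exactly for
homogeneous polynomials, and both are additive on products. -/
lemma isHomogeneous_totalDegree_of_dvd {p q : MvPolynomial σ R} {n : ℕ}
    (hp : p.IsHomogeneous n) (hp0 : p ≠ 0) (hqp : q ∣ p) : q.IsHomogeneous q.totalDegree := by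
  obtain ⟨g, rfl⟩ := hqp
  have hq0 : q ≠ 0 := left_ne_zero_of_mul hp0
  have hg0 : g ≠ 0 := right_ne_zero_of_mul hp0
  have hn : q.totalDegree + g.totalDegree = n := by
    rw [← totalDegree_mul_of_isDomain hq0 hg0, hp.totalDegree hp0]
  have horder := le_order_of_isHomogeneous hp
  rw [coe_mul, MvPowerSeries.order_mul, ← hn, Nat.cast_add] at horder
  refine isHomogeneous_totalDegree_of_totalDegree_le_order ?_
  refine (ENat.add_le_add_iff_right (ENat.natCast_ne_top g.totalDegree)).1 (horder.trans ?_)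
  gcongr
  exact order_le_totalDegree hg0

lemma exists_isHomogeneous_eq_mul_of_dvd {p q : MvPolynomial σ R} {m n : ℕ}
    (hp : p.IsHomogeneous n) (hq : q.IsHomogeneous m) (hqp : q ∣ p) :
    ∃ g : MvPolynomial σ R, g.IsHomogeneous (n - m) ∧ p = q * g := by
  obtain ⟨g, rfl⟩ := hqp
  rcases eq_or_ne (q * g) 0 with h0 | h0
  · exact ⟨0, isHomogeneous_zero σ R _, by rw [h0, mul_zero]⟩
  have hg := isHomogeneous_totalDegree_of_dvd hp h0 (dvd_mul_left g q)
  have hdeg := (hq.mul hg).inj_right hp h0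
  exact ⟨g, by rwa [← hdeg, Nat.add_sub_cancel_left], rfl⟩

end HomogeneousDivisor

section LinearAndQuadraticForms

variable {σ R : Type*} [CommRing R]

lemma exists_linearMap_eval_eq {L : MvPolynomial σ R} (hL : L.IsHomogeneous 1) :
    ∃ l : (σ → R) →ₗ[R] R, ∀ x, eval x L = l x := by
  rw [← mem_homogeneousSubmodule, homogeneousSubmodule_one_eq_span_X] at hL
  induction hL using Submodule.span_induction with
  | mem L hL =>
    obtain ⟨i, rfl⟩ := hL
    exact ⟨LinearMap.proj i, fun x => by simp⟩
  | zero => exact ⟨0, fun x => by simp⟩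
  | add L M _ _ hL hM =>
    obtain ⟨l, hl⟩ := hL
    obtain ⟨m, hm⟩ := hM
    exact ⟨l + m, fun x => by simp [hl, hm]⟩
  | smul c L _ hL =>
    obtain ⟨l, hl⟩ := hL
    exact ⟨c • l, fun x => by simp [hl, smul_eval]⟩

lemma exists_isHomogeneous_one_eval_eq [Finite σ] (l : (σ → R) →ₗ[R] R) :
    ∃ L : MvPolynomial σ R, L.IsHomogeneous 1 ∧ ∀ x, eval x L = l x := by
  classical
  have := Fintype.ofFinite σ
  refine ⟨∑ i, C (l fun j => if i = j then 1 else 0) * X i,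
    .sum _ _ _ fun i _ => isHomogeneous_C_mul_X _ _, fun x => ?_⟩
  simp only [map_sum, map_mul, eval_C, eval_X]
  rw [LinearMap.pi_apply_eq_sum_univ l x]
  exact Finset.sum_congr rfl fun i _ => mul_comm _ _

lemma exists_quadraticForm_eval_eq {Q : MvPolynomial σ R} (hQ : Q.IsHomogeneous 2) :
    ∃ q : QuadraticForm R (σ → R), ∀ x, eval x Q = q x := by
  rw [← mem_homogeneousSubmodule, ← homogeneousSubmodule_one_pow, pow_two] at hQ
  refine Submodule.mul_induction_on hQ (fun L hL M hM => ?_) ?_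
  · obtain ⟨l, hl⟩ := exists_linearMap_eval_eq hL
    obtain ⟨m, hm⟩ := exists_linearMap_eval_eq hM
    exact ⟨QuadraticMap.linMulLin l m, fun x => by simp [hl, hm]⟩
  · rintro P Q ⟨p, hp⟩ ⟨q, hq⟩
    exact ⟨p + q, fun x => by simp [hp, hq]⟩

end LinearAndQuadraticForms

section ReducibleQuadraticForms

open scoped Topology

variable {K} [IsAlgClosed K] {σ : Type*} [Finite σ]

lemma halfDiscr_eval_mul_eq_zero {σ R : Type*} [CommRing R] {L M : MvPolynomial σ R}
    (hL : L.IsHomogeneous 1) (hM : M.IsHomogeneous 1) (u v w : σ → R) :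
    halfDiscr (fun x => eval x (L * M)) u v w = 0 := by
  obtain ⟨l, hl⟩ := exists_linearMap_eval_eq hL
  obtain ⟨m, hm⟩ := exists_linearMap_eval_eq hM
  have heval : (fun x => eval x (L * M)) = QuadraticMap.linMulLin l m :=
    funext fun x => by simp [hl, hm]
  rw [heval, halfDiscr_linMulLin]

lemma forall_halfDiscr_eval_eq_zero_iff {Q : MvPolynomial σ K} (hQ : Q.IsHomogeneous 2) :
    (∀ u v w, halfDiscr (fun x => eval x Q) u v w = 0) ↔
      ∃ L M : MvPolynomial σ K, L.IsHomogeneous 1 ∧ M.IsHomogeneous 1 ∧ Q = L * M := by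
  constructor
  · intro h
    obtain ⟨q, hq⟩ := exists_quadraticForm_eval_eq hQ
    simp only [hq] at h
    obtain ⟨l, m, rfl⟩ := forall_halfDiscr_eq_zero_iff.1 h
    obtain ⟨L, hL, hLl⟩ := exists_isHomogeneous_one_eval_eq l
    obtain ⟨M, hM, hMm⟩ := exists_isHomogeneous_one_eval_eq m
    exact ⟨L, M, hL, hM, MvPolynomial.funext fun x => by simp [hq, hLl, hMm]⟩
  · rintro ⟨L, M, hL, hM, rfl⟩
    exact halfDiscr_eval_mul_eq_zero hL hM

lemma isClosed_zariski_setOf_eq_mul :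
    IsClosed[zariskiTopology K _] {Q : homogeneousSubmodule σ K 2 |
      ∃ L M : MvPolynomial σ K, L.IsHomogeneous 1 ∧ M.IsHomogeneous 1 ∧ Q.1 = L * M} := by
  let evalFun (x : σ → K) : regularFunctions K (homogeneousSubmodule σ K 2) :=
    ⟨_, coe_linearMap_mem_regularFunctions
      ((aeval x).toLinearMap ∘ₗ (homogeneousSubmodule σ K 2).subtype)⟩
  have halfDiscr_evalFun (u v w : σ → K) (Q : homogeneousSubmodule σ K 2) :
      (halfDiscr evalFun u v w).1 Q = halfDiscr (fun x => eval x Q.1) u v w :=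
    map_halfDiscr ((Pi.evalRingHom (fun _ => K) Q).comp (regularFunctions K _).val.toRingHom)
      evalFun u v w
  convert! isClosed_zariski_setOf_forall_eq_zero fun u : (σ → K) × (σ → K) × (σ → K) =>
    (halfDiscr evalFun u.1 u.2.1 u.2.2).2 using 1
  ext Q
  rw [Set.mem_ofPred_eq, ← forall_halfDiscr_eval_eq_zero_iff Q.2]
  simp only [Set.mem_ofPred_eq, halfDiscr_evalFun, Prod.forall]

end ReducibleQuadraticForms

section CommonFactor

open scoped Topology

variable {K} {σ : Type*}

lemma constantCoeff_eq_zero_of_isHomogeneous {R : Type*} [CommSemiring R] {p : MvPolynomial σ R}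
    {n : ℕ} (hp : p.IsHomogeneous n) (hn : n ≠ 0) : constantCoeff p = 0 := by
  rw [constantCoeff_eq, hp.coeff_eq_zero (by simpa using hn.symm)]

lemma not_isRelPrime_of_isHomogeneous_dvd {F G D : MvPolynomial σ K} {n : ℕ}
    (hD : D.IsHomogeneous n) (hn : n ≠ 0) (hDF : D ∣ F) (hDG : D ∣ G) : ¬ IsRelPrime F G := by
  intro h
  have hunit := (h hDF hDG).map constantCoeff
  rw [constantCoeff_eq_zero_of_isHomogeneous hD hn] at hunit
  exact not_isUnit_zero hunit

lemma exists_isHomogeneous_dvd_of_not_isRelPrime {F G : MvPolynomial σ K} {n : ℕ}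
    (hF : F.IsHomogeneous n) (hG : G.IsHomogeneous n) (h : ¬ IsRelPrime F G)
    (hFG : F ≠ 0 ∨ G ≠ 0) :
    ∃ (D : MvPolynomial σ K) (e : ℕ),
      e ≠ 0 ∧ e ≤ n ∧ D ≠ 0 ∧ D.IsHomogeneous e ∧ D ∣ F ∧ D ∣ G := by
  wlog hF0 : F ≠ 0 generalizing F G
  · obtain ⟨D, e, he, hen, hD0, hD, hDG, hDF⟩ :=
      this hG hF (fun h' => h h'.symm) hFG.symm (hFG.resolve_left hF0)
    exact ⟨D, e, he, hen, hD0, hD, hDF, hDG⟩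
  obtain ⟨D, hDF, hDG, hDunit⟩ : ∃ D, D ∣ F ∧ D ∣ G ∧ ¬ IsUnit D := by
    simpa [IsRelPrime] using h
  have hD0 : D ≠ 0 := ne_zero_of_dvd_ne_zero hF0 hDF
  refine ⟨D, D.totalDegree, fun hdeg => hDunit ?_, ?_, hD0,
    isHomogeneous_totalDegree_of_dvd hF hF0 hDF, hDF, hDG⟩
  · rw [totalDegree_eq_zero_iff_eq_C] at hdeg
    rw [hdeg] at hD0 ⊢
    exact (isUnit_iff_ne_zero.2 (C_ne_zero.1 hD0)).map C
  · exact (totalDegree_le_of_dvd_of_isDomain hDF hF0).trans hF.totalDegree_le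

theorem not_isRelPrime_iff_exists_syzygy [Nonempty σ] {F G : MvPolynomial σ K} {d : ℕ}
    (hF : F.IsHomogeneous (d + 1)) (hG : G.IsHomogeneous (d + 1)) :
    ¬ IsRelPrime F G ↔ ∃ L M : MvPolynomial σ K, L.IsHomogeneous d ∧ M.IsHomogeneous d ∧
      (L ≠ 0 ∨ M ≠ 0) ∧ L * F + M * G = 0 := by
  obtain ⟨i⟩ := ‹Nonempty σ›
  constructor
  · intro h
    by_cases hFG : F = 0 ∧ G = 0
    · exact ⟨X i ^ d, 0, isHomogeneous_X_pow i d, isHomogeneous_zero σ K d,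
        .inl (pow_ne_zero d (X_ne_zero i)), by simp [hFG]⟩
    have hFG' : F ≠ 0 ∨ G ≠ 0 := by rwa [← not_and_or]
    obtain ⟨D, e, he, hen, -, hD, hDF, hDG⟩ :=
      exists_isHomogeneous_dvd_of_not_isRelPrime hF hG h hFG'
    obtain ⟨k, rfl⟩ := Nat.exists_eq_succ_of_ne_zero he
    obtain ⟨f, hf, rfl⟩ := exists_isHomogeneous_eq_mul_of_dvd hF hD hDF
    obtain ⟨g, hg, rfl⟩ := exists_isHomogeneous_eq_mul_of_dvd hG hD hDG
    have hd : k + (d + 1 - (k + 1)) = d := by lia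
    have hX : (X i : MvPolynomial σ K) ^ k ≠ 0 := pow_ne_zero k (X_ne_zero i)
    refine ⟨X i ^ k * g, -(X i ^ k * f), hd ▸ (isHomogeneous_X_pow i k).mul hg,
      hd ▸ ((isHomogeneous_X_pow i k).mul hf).neg, ?_, by ring⟩
    exact hFG'.symm.imp (fun h => mul_ne_zero hX (right_ne_zero_of_mul h))
      fun h => neg_ne_zero.2 (mul_ne_zero hX (right_ne_zero_of_mul h))
  · rintro ⟨L, M, hL, hM, hLM, hsyz⟩ h
    have eq_zero_of_dvd : ∀ {P Q : MvPolynomial σ K}, P.IsHomogeneous (d + 1) →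
        Q.IsHomogeneous d → P ∣ Q → Q = 0 := by
      intro P Q hP hQ hPQ
      by_contra hQ0
      have := totalDegree_le_of_dvd_of_isDomain hPQ hQ0
      rw [hP.totalDegree (ne_zero_of_dvd_ne_zero hQ0 hPQ), hQ.totalDegree hQ0] at this
      lia
    have hFM : F ∣ M := h.dvd_of_dvd_mul_right ⟨-L, by linear_combination hsyz⟩
    have hGL : G ∣ L := h.symm.dvd_of_dvd_mul_right ⟨-M, by linear_combination hsyz⟩
    exact hLM.elim (· (eq_zero_of_dvd hG hL hGL)) (· (eq_zero_of_dvd hF hM hFM))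

theorem isClosed_zariski_setOf_not_isRelPrime [Finite σ] [Nonempty σ] (d : ℕ) :
    IsClosed[zariskiTopology K _] {F : homogeneousSubmodule σ K (d + 1) ×
      homogeneousSubmodule σ K (d + 1) | ¬ IsRelPrime F.1.1 F.2.1} := by
  have : Module.Finite K (homogeneousSubmodule σ K d) :=
    Module.Finite.iff_fg.2 (homogeneousSubmodule_fg σ K d)
  let syz : homogeneousSubmodule σ K (d + 1) × homogeneousSubmodule σ K (d + 1) →ₗ[K]
      homogeneousSubmodule σ K d × homogeneousSubmodule σ K d →ₗ[K] MvPolynomial σ K :=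
    LinearMap.mk₂ K (fun F L => L.1.1 * F.1.1 + L.2.1 * F.2.1)
      (fun F G L => by simpa [mul_add] using add_add_add_comm _ _ _ _) (fun c F L => by simp)
      (fun F L M => by simpa [add_mul] using add_add_add_comm _ _ _ _) (fun c F L => by simp)
  convert! isClosed_zariski_setOf_not_injective syz using 1
  ext F
  rw [Set.mem_ofPred_eq, Set.mem_ofPred_eq, not_isRelPrime_iff_exists_syzygy F.1.2 F.2.2,
    injective_iff_map_eq_zero]
  push Not
  constructor
  · rintro ⟨L, M, hL, hM, hLM, hsyz⟩
    refine ⟨(⟨L, hL⟩, ⟨M, hM⟩), hsyz, fun h0 => ?_⟩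
    rw [Prod.mk_eq_zero] at h0
    exact hLM.elim (· (congrArg Subtype.val h0.1)) (· (congrArg Subtype.val h0.2))
  · rintro ⟨⟨L, M⟩, hsyz, hLM⟩
    exact ⟨L, M, L.2, M.2, by simpa [or_iff_not_imp_left] using hLM, hsyz⟩

end CommonFactor

section KrullDimension

lemma ringKrullDim_quotient_span_pair_add_two_le {R : Type*} [CommRing R] [IsDomain R]
    [DecompositionMonoid R] {x y : R} (hx : x ≠ 0) (hxy : IsRelPrime x y) :
    ringKrullDim (R ⧸ Ideal.span {x, y}) + 2 ≤ ringKrullDim R := by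
  have hle : Ideal.span {x} ≤ Ideal.span {x, y} := Ideal.span_mono (by simp)
  have hy : Ideal.Quotient.mk (Ideal.span {x}) y ∈ nonZeroDivisors (R ⧸ Ideal.span {x}) := by
    rw [mem_nonZeroDivisors_iff_right]
    intro a
    obtain ⟨a, rfl⟩ := Ideal.Quotient.mk_surjective a
    rw [← map_mul, Ideal.Quotient.eq_zero_iff_mem, Ideal.Quotient.eq_zero_iff_mem,
      Ideal.mem_span_singleton, Ideal.mem_span_singleton]
    exact hxy.dvd_of_dvd_mul_right
  have hy0 : Ideal.Quotient.factor hle (Ideal.Quotient.mk _ y) = 0 := by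
    rw [Ideal.Quotient.factor_mk, Ideal.Quotient.eq_zero_iff_mem]
    exact Ideal.subset_span (by simp)
  calc ringKrullDim (R ⧸ Ideal.span {x, y}) + 2
      = ringKrullDim (R ⧸ Ideal.span {x, y}) + 1 + 1 := by rw [add_assoc, one_add_one_eq_two]
    _ ≤ ringKrullDim (R ⧸ Ideal.span {x}) + 1 := by
        gcongr
        exact ringKrullDim_succ_le_of_surjective _ (Ideal.Quotient.factor_surjective hle) hy hy0
    _ ≤ ringKrullDim R :=
        ringKrullDim_quotient_succ_le_of_nonZeroDivisor (mem_nonZeroDivisors_of_ne_zero hx)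

lemma card_le_height_ker_aeval {σ R : Type*} [DecidableEq σ] [CommRing R] [IsDomain R]
    (s : Finset σ) :
    (s.card : ℕ∞) ≤ (RingHom.ker (aeval (R := R) fun i => if i ∈ s then 0 else
      (X i : MvPolynomial σ R))).height := by
  induction s using Finset.induction_on with
  | empty => simp
  | insert a s ha ih =>
    rw [Finset.card_insert_of_notMem ha, Nat.cast_add, Nat.cast_one]
    let killVars (t : Finset σ) : MvPolynomial σ R →ₐ[R] MvPolynomial σ R :=
      aeval fun i => if i ∈ t then 0 else X i
    have prime_ker (t : Finset σ) : (RingHom.ker (killVars t)).IsPrime := RingHom.ker_isPrime _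
    have hcomp : killVars (insert a s) = (killVars (insert a s)).comp (killVars s) := by
      refine algHom_ext fun i => ?_
      simp only [killVars, aeval_X, AlgHom.comp_apply]
      split_ifs <;> simp_all
    suffices RingHom.ker (killVars s) < RingHom.ker (killVars (insert a s)) from
      (add_le_add_left ih 1).trans (Ideal.height_add_one_le_of_lt_of_isPrime this)
    refine SetLike.lt_iff_le_and_exists.2 ⟨fun f hf => ?_, X a, ?_, ?_⟩
    · rw [RingHom.mem_ker] at hf ⊢
      rw [hcomp, AlgHom.comp_apply, hf, map_zero]
    · simp [killVars, RingHom.mem_ker]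
    · simp [killVars, RingHom.mem_ker, ha]

variable {K} {n : ℕ}

lemma le_ringKrullDim_quotient_span_singleton {D : MvPolynomial (Fin (n + 1)) K}
    (hD : constantCoeff D = 0) :
    (n : WithBot ℕ∞) ≤ ringKrullDim (MvPolynomial (Fin (n + 1)) K ⧸ Ideal.span {D}) := by
  let φ : MvPolynomial (Fin (n + 1)) K →ₐ[K] MvPolynomial (Fin (n + 1)) K :=
    aeval fun i => if i ∈ Finset.univ then 0 else X i
  have hφ : D ∈ RingHom.ker φ := by
    simp only [φ, RingHom.mem_ker, Finset.mem_univ, if_true, aeval_zero', hD, map_zero]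
  have hheight : ((n + 1 : ℕ) : ℕ∞) ≤ (RingHom.ker φ).height := by
    simpa only [Finset.card_univ, Fintype.card_fin] using
      card_le_height_ker_aeval (R := K) (Finset.univ : Finset (Fin (n + 1)))
  have : (RingHom.ker φ).IsPrime := RingHom.ker_isPrime _
  rw [← ENat.WithBot.add_le_add_one_right_iff]
  exact le_trans (by exact_mod_cast hheight) (Ideal.height_le_ringKrullDim_quotient_add_one hφ)

lemma exists_constantCoeff_eq_zero_dvd_of_not_isRelPrime {σ : Type*} {F G : MvPolynomial σ K}
    {d : ℕ} (hF : F.IsHomogeneous d) (hG : G.IsHomogeneous d) (h : ¬ IsRelPrime F G) :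
    ∃ D, constantCoeff D = 0 ∧ D ∣ F ∧ D ∣ G := by
  by_cases hFG : F = 0 ∧ G = 0
  · exact ⟨0, map_zero _, by simp [hFG]⟩
  · obtain ⟨D, e, he, -, -, hD, hDF, hDG⟩ :=
      exists_isHomogeneous_dvd_of_not_isRelPrime hF hG h (not_and_or.1 hFG)
    exact ⟨D, constantCoeff_eq_zero_of_isHomogeneous hD he, hDF, hDG⟩

theorem vdimGE_pair_iff_not_isRelPrime {F G : MvPolynomial (Fin (n + 1)) K} {d : ℕ}
    (hn : n ≠ 0) (hd : d ≠ 0) (hF : F.IsHomogeneous d) (hG : G.IsHomogeneous d) :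
    vdimGE n 2 ![F, G] ((n : ℤ) - 1) ↔ ¬ IsRelPrime F G := by
  have hdim : ((n : ℤ) - 1).toNat + 1 = n := by lia
  rw [vdimGE, hdim, Matrix.range_cons_cons_empty]
  constructor
  · intro h hFG
    have hF0 : F ≠ 0 := by
      rintro rfl
      exact not_isRelPrime_of_isHomogeneous_dvd hG hd (dvd_zero G) dvd_rfl hFG
    have hle := (add_le_add_left h 2).trans (ringKrullDim_quotient_span_pair_add_two_le hF0 hFG)
    rw [MvPolynomial.ringKrullDim_of_isNoetherianRing, ringKrullDim_eq_zero_of_field, zero_add,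
      Nat.card_fin] at hle
    norm_cast at hle
    lia
  · intro h
    obtain ⟨D, hD, hDF, hDG⟩ := exists_constantCoeff_eq_zero_dvd_of_not_isRelPrime hF hG h
    have hle : Ideal.span {F, G} ≤ Ideal.span {D} := by
      simp [Ideal.span_le, Set.insert_subset_iff, Ideal.mem_span_singleton, hDF, hDG]
    exact (le_ringKrullDim_quotient_span_singleton hD).trans
      (ringKrullDim_le_of_surjective _ (Ideal.Quotient.factor_surjective hle))

end KrullDimension

section LinearDependence

variable {K} {V : Type*} [AddCommGroup V] [Module K V]

lemma not_linearIndependent_pair_iff {x y : V} :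
    ¬ LinearIndependent K ![x, y] ↔ ∃ (a b : K) (z : V), x = a • z ∧ y = b • z := by
  constructor
  · intro h
    rcases eq_or_ne x 0 with rfl | hx
    · exact ⟨0, 1, y, by simp⟩
    · rw [LinearIndependent.pair_iff' hx] at h
      push Not at h
      obtain ⟨a, rfl⟩ := h
      exact ⟨1, a, x, by simp⟩
  · rintro ⟨a, b, z, rfl, rfl⟩ h
    rw [LinearIndependent.pair_iff] at h
    obtain ⟨rfl, ha⟩ := h b (-a) (by module)
    obtain rfl := neg_eq_zero.1 ha
    simpa using h 1 1

lemma linearIndependent_pair_coe_iff {W : Submodule K V} {x y : W} :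
    LinearIndependent K ![x.1, y.1] ↔ LinearIndependent K ![x, y] := by
  have hcoe : ![x.1, y.1] = W.subtype ∘ ![x, y] := by
    funext i
    fin_cases i <;> rfl
  rw [hcoe, W.subtype.linearIndependent_iff W.ker_subtype]

lemma dvd_or_dvd_of_not_linearIndependent {R : Type*} [CommRing R] [Algebra K R] {x y : R}
    (h : ¬ LinearIndependent K ![x, y]) : x ∣ y ∨ y ∣ x := by
  obtain ⟨a, b, z, rfl, rfl⟩ := not_linearIndependent_pair_iff.1 h
  rcases eq_or_ne a 0 with rfl | ha
  · exact .inr (by simp)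
  · refine .inl ⟨algebraMap K R (b / a), ?_⟩
    rw [mul_comm, ← Algebra.smul_def, smul_smul, div_mul_cancel₀ b ha]

end LinearDependence

section QuadraticFormPairs

variable {K} {σ : Type*} {F G : MvPolynomial σ K}

lemma exists_isHomogeneous_one_dvd [Nonempty σ] (h : ∃ L M : MvPolynomial σ K,
    L.IsHomogeneous 1 ∧ M.IsHomogeneous 1 ∧ F = L * M) :
    ∃ L : MvPolynomial σ K, L.IsHomogeneous 1 ∧ L ≠ 0 ∧ L ∣ F := by
  obtain ⟨L, M, hL, -, rfl⟩ := h
  rcases eq_or_ne L 0 with rfl | hL0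
  · exact ⟨X (Classical.arbitrary σ), isHomogeneous_X K _, X_ne_zero _, by simp⟩
  · exact ⟨L, hL, hL0, dvd_mul_right L M⟩

theorem not_isRelPrime_iff_exists_linear_dvd_or_not_linearIndependent
    (hF : F.IsHomogeneous 2) (hG : G.IsHomogeneous 2) :
    ¬ IsRelPrime F G ↔ (∃ L : MvPolynomial σ K, L.IsHomogeneous 1 ∧ L ≠ 0 ∧ L ∣ F ∧ L ∣ G) ∨
      ¬ LinearIndependent K ![F, G] := by
  constructor
  · intro h
    by_cases hFG : F = 0 ∧ G = 0
    · exact .inr (not_linearIndependent_pair_iff.2 ⟨0, 0, 0, by simp [hFG]⟩)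
    obtain ⟨D, e, he, he2, hD0, hD, hDF, hDG⟩ :=
      exists_isHomogeneous_dvd_of_not_isRelPrime hF hG h (not_and_or.1 hFG)
    obtain rfl | rfl : e = 1 ∨ e = 2 := by lia
    · exact .inl ⟨D, hD, hD0, hDF, hDG⟩
    · have exists_smul_eq : ∀ {P : MvPolynomial σ K}, P.IsHomogeneous 2 → D ∣ P →
          ∃ a : K, P = a • D := fun hP hDP => by
        obtain ⟨g, hg, rfl⟩ := exists_isHomogeneous_eq_mul_of_dvd hP hD hDP
        rw [Nat.sub_self, ← totalDegree_zero_iff_isHomogeneous, totalDegree_eq_zero_iff_eq_C] at hg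
        exact ⟨g.coeff 0, by rw [smul_eq_C_mul, ← hg, mul_comm]⟩
      obtain ⟨a, ha⟩ := exists_smul_eq hF hDF
      obtain ⟨b, hb⟩ := exists_smul_eq hG hDG
      exact .inr (not_linearIndependent_pair_iff.2 ⟨a, b, D, ha, hb⟩)
  · rintro (⟨L, hL, -, hLF, hLG⟩ | h)
    · exact not_isRelPrime_of_isHomogeneous_dvd hL one_ne_zero hLF hLG
    · rcases dvd_or_dvd_of_not_linearIndependent h with h | h
      · exact not_isRelPrime_of_isHomogeneous_dvd hF two_ne_zero dvd_rfl h
      · exact not_isRelPrime_of_isHomogeneous_dvd hG two_ne_zero h dvd_rfl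

theorem exists_linear_dvd_iff [Nonempty σ] (hF : F.IsHomogeneous 2) (hG : G.IsHomogeneous 2) :
    (∃ L : MvPolynomial σ K, L.IsHomogeneous 1 ∧ L ≠ 0 ∧ L ∣ F ∧ L ∣ G) ↔
      ¬ IsRelPrime F G ∧
      (∃ L M : MvPolynomial σ K, L.IsHomogeneous 1 ∧ M.IsHomogeneous 1 ∧ F = L * M) ∧
      ∃ L M : MvPolynomial σ K, L.IsHomogeneous 1 ∧ M.IsHomogeneous 1 ∧ G = L * M := by
  constructor
  · rintro ⟨L, hL, -, hLF, hLG⟩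
    obtain ⟨f, hf, hLf⟩ := exists_isHomogeneous_eq_mul_of_dvd hF hL hLF
    obtain ⟨g, hg, hLg⟩ := exists_isHomogeneous_eq_mul_of_dvd hG hL hLG
    exact ⟨not_isRelPrime_of_isHomogeneous_dvd hL one_ne_zero hLF hLG, ⟨L, f, hL, hf, hLf⟩,
      L, g, hL, hg, hLg⟩
  · rintro ⟨h, hF', hG'⟩
    rcases (not_isRelPrime_iff_exists_linear_dvd_or_not_linearIndependent hF hG).1 h with h | h
    · exact h
    · rcases dvd_or_dvd_of_not_linearIndependent h with hFG | hGF
      · obtain ⟨L, hL, hL0, hLF⟩ := exists_isHomogeneous_one_dvd hF'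
        exact ⟨L, hL, hL0, hLF, hLF.trans hFG⟩
      · obtain ⟨L, hL, hL0, hLG⟩ := exists_isHomogeneous_one_dvd hG'
        exact ⟨L, hL, hL0, hLG.trans hGF, hLG⟩

lemma not_exists_linear_dvd_X_mul_X_add_X_sq {i j k : σ} (hij : i ≠ j)
    (hik : i ≠ k) (hjk : j ≠ k) :
    ¬ ∃ L : MvPolynomial σ K, L.IsHomogeneous 1 ∧ L ∣ X i * X j + X k ^ 2 := by
  classical
  rintro ⟨L, hL, hLQ⟩
  have hQ : (X i * X j + X k ^ 2 : MvPolynomial σ K).IsHomogeneous 2 :=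
    ((isHomogeneous_X K i).mul (isHomogeneous_X K j)).add (isHomogeneous_X_pow k 2)
  obtain ⟨M, hM, hLM⟩ := exists_isHomogeneous_eq_mul_of_dvd hQ hL hLQ
  have hdiscr := halfDiscr_eval_mul_eq_zero hL hM
    (Pi.single i 1) (Pi.single j 1) (Pi.single k 1)
  rw [← hLM] at hdiscr
  simp [halfDiscr, QuadraticMap.polar, hij, hij.symm, hik, hik.symm, hjk, hjk.symm] at hdiscr

end QuadraticFormPairs

section Components

variable (r : ℕ)

/-- The pairs of quadratic forms with a common nonzero linear factor, the component `A`. -/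
def commonFactorLocus : Set (pairSpace K r) :=
  {F | ∃ L : MvPolynomial (Fin (r + 1)) K, L.IsHomogeneous 1 ∧ L ≠ 0 ∧
    L ∣ (F.1 : MvPolynomial (Fin (r + 1)) K) ∧ L ∣ (F.2 : MvPolynomial (Fin (r + 1)) K)}

/-- The linearly dependent pairs of quadratic forms, the component `B`. -/
def dependentLocus : Set (pairSpace K r) :=
  {F | ¬ LinearIndependent K
    ![(F.1 : MvPolynomial (Fin (r + 1)) K), (F.2 : MvPolynomial (Fin (r + 1)) K)]}

variable {K r}

lemma commonFactorLocus_union_dependentLocus :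
    commonFactorLocus K r ∪ dependentLocus K r = {F | ¬ IsRelPrime F.1.1 F.2.1} :=
  Set.ext fun F =>
    (not_isRelPrime_iff_exists_linear_dvd_or_not_linearIndependent F.1.2 F.2.2).symm

lemma setOf_vdimGE_eq_commonFactorLocus_union_dependentLocus (hr : r ≠ 0) :
    {F : pairSpace K r | vdimGE r 2 ![F.1.1, F.2.1] ((r : ℤ) - 1)} =
      commonFactorLocus K r ∪ dependentLocus K r := by
  rw [commonFactorLocus_union_dependentLocus]
  exact Set.ext fun F => vdimGE_pair_iff_not_isRelPrime hr two_ne_zero F.1.2 F.2.2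

lemma isClosed_commonFactorLocus [IsAlgClosed K] : IsClosed (commonFactorLocus K r) := by
  have h : commonFactorLocus K r = {F | ¬ IsRelPrime F.1.1 F.2.1} ∩
      (LinearMap.fst K _ _ ⁻¹' {Q : homogeneousSubmodule (Fin (r + 1)) K 2 |
        ∃ L M : MvPolynomial _ K, L.IsHomogeneous 1 ∧ M.IsHomogeneous 1 ∧ Q.1 = L * M} ∩
      LinearMap.snd K _ _ ⁻¹' {Q : homogeneousSubmodule (Fin (r + 1)) K 2 |
        ∃ L M : MvPolynomial _ K, L.IsHomogeneous 1 ∧ M.IsHomogeneous 1 ∧ Q.1 = L * M}) :=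
    Set.ext fun F => exists_linear_dvd_iff F.1.2 F.2.2
  rw [h]
  refine IsClosed.inter (X := pairSpace K r) (isClosed_zariski_setOf_not_isRelPrime 1)
    (IsClosed.inter (X := pairSpace K r) ?_ ?_) <;>
  exact isClosed_zariski_preimage_linearMap _ isClosed_zariski_setOf_eq_mul

lemma isClosed_dependentLocus : IsClosed (dependentLocus K r) := by
  let coord : Fin 2 → pairSpace K r →ₗ[K] MvPolynomial (Fin (r + 1)) K :=
    ![Submodule.subtype _ ∘ₗ LinearMap.fst K _ _, Submodule.subtype _ ∘ₗ LinearMap.snd K _ _]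
  have hcoord (F : pairSpace K r) : (fun i => coord i F) = ![F.1.1, F.2.1] := by
    funext i
    fin_cases i <;> rfl
  have h := isClosed_zariski_setOf_not_linearIndependent coord
  simp only [hcoord] at h
  exact h

lemma isIrreducible_commonFactorLocus [Infinite K] : IsIrreducible (commonFactorLocus K r) := by
  let W (d : ℕ) := homogeneousSubmodule (Fin (r + 1)) K d
  let β : W 1 →ₗ[K] W 1 × W 1 →ₗ[K] pairSpace K r :=
    LinearMap.mk₂ K (fun L g => (⟨L.1 * g.1.1, L.2.mul g.1.2⟩, ⟨L.1 * g.2.1, L.2.mul g.2.2⟩))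
      (fun L M g => by ext : 2 <;> simp [add_mul]) (fun c L g => by ext : 2 <;> simp)
      (fun L g h => by ext : 2 <;> simp [mul_add]) (fun c L g => by ext : 2 <;> simp)
  convert! isIrreducible_zariski_range_bilinear β using 1
  ext F
  constructor
  · rintro ⟨L, hL, -, hLF, hLG⟩
    obtain ⟨f, hf, hLf⟩ := exists_isHomogeneous_eq_mul_of_dvd F.1.2 hL hLF
    obtain ⟨g, hg, hLg⟩ := exists_isHomogeneous_eq_mul_of_dvd F.2.2 hL hLG
    exact ⟨(⟨L, hL⟩, ⟨f, hf⟩, ⟨g, hg⟩), by ext : 2 <;> simp [β, hLf, hLg]⟩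
  · rintro ⟨⟨L, f, g⟩, rfl⟩
    rcases eq_or_ne L 0 with rfl | hL0
    · exact ⟨X 0, isHomogeneous_X K 0, X_ne_zero 0, by simp [β]⟩
    · exact ⟨L, L.2, by simpa using hL0, by simp [β]⟩

lemma isIrreducible_dependentLocus [Infinite K] : IsIrreducible (dependentLocus K r) := by
  let β : K × K →ₗ[K] homogeneousSubmodule (Fin (r + 1)) K 2 →ₗ[K] pairSpace K r :=
    LinearMap.mk₂ K (fun c Q => (c.1 • Q, c.2 • Q)) (fun c d Q => by simp [add_smul])
      (fun t c Q => by simp [mul_smul]) (fun c P Q => by simp)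
      (fun t c Q => by simp [smul_comm t])
  convert! isIrreducible_zariski_range_bilinear β using 1
  ext F
  change ¬ LinearIndependent K ![F.1.1, F.2.1] ↔ _
  rw [linearIndependent_pair_coe_iff, not_linearIndependent_pair_iff]
  constructor
  · rintro ⟨a, b, Q, ha, hb⟩
    exact ⟨((a, b), Q), Prod.ext ha.symm hb.symm⟩
  · rintro ⟨⟨⟨a, b⟩, Q⟩, rfl⟩
    exact ⟨a, b, Q, rfl, rfl⟩

lemma not_commonFactorLocus_subset_dependentLocus (hr : r ≠ 0) :
    ¬ commonFactorLocus K r ⊆ dependentLocus K r := by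
  intro h
  obtain ⟨i, j, hij⟩ : ∃ i j : Fin (r + 1), i ≠ j :=
    Fintype.one_lt_card_iff.1 (by rw [Fintype.card_fin]; lia)
  have hX := isHomogeneous_X K (σ := Fin (r + 1))
  let F : pairSpace K r := (⟨X i * X i, (hX i).mul (hX i)⟩, ⟨X i * X j, (hX i).mul (hX j)⟩)
  have hF : F ∈ commonFactorLocus K r :=
    ⟨X i, hX i, X_ne_zero i, dvd_mul_right _ _, dvd_mul_right _ _⟩
  rcases dvd_or_dvd_of_not_linearIndependent (h hF) with h | h
  · exact hij (X_dvd_X.1 ((mul_dvd_mul_iff_left (X_ne_zero i)).1 h))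
  · exact hij.symm (X_dvd_X.1 ((mul_dvd_mul_iff_left (X_ne_zero i)).1 h))

lemma not_dependentLocus_subset_commonFactorLocus (hr : 2 ≤ r) :
    ¬ dependentLocus K r ⊆ commonFactorLocus K r := by
  intro h
  obtain ⟨i, j, k, hij, hik, hjk⟩ : ∃ i j k : Fin (r + 1), i ≠ j ∧ i ≠ k ∧ j ≠ k :=
    Fintype.two_lt_card_iff.1 (by rw [Fintype.card_fin]; lia)
  let Q : homogeneousSubmodule (Fin (r + 1)) K 2 := ⟨X i * X j + X k ^ 2,
    ((isHomogeneous_X K i).mul (isHomogeneous_X K j)).add (isHomogeneous_X_pow k 2)⟩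
  obtain ⟨L, hL, -, hLQ, -⟩ := @h (Q, Q)
    (not_linearIndependent_pair_iff.2 ⟨1, 1, Q.1, (one_smul K _).symm, (one_smul K _).symm⟩)
  exact not_exists_linear_dvd_X_mul_X_add_X_sq hij hik hjk ⟨L, hL, hLQ⟩

end Components

/-- Over an algebraically closed field and for `r ≥ 2`, the Zariski closed
set `Z = {(F₁, F₂) : dim V(F₁, F₂) ≥ r - 1}` of pairs of quadratic forms has exactly two
irreducible components (maximal irreducible subsets): the set `A` of pairs with a common
nonzero linear factor and the set `B` of linearly dependent pairs. -/
theorem statement14 [IsAlgClosed K] (r : ℕ) (hr : 2 ≤ r)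
    (A B Z : Set (pairSpace K r))
    (hA : A = {F | ∃ L : MvPolynomial (Fin (r + 1)) K, L.IsHomogeneous 1 ∧ L ≠ 0 ∧
      L ∣ (F.1 : MvPolynomial (Fin (r + 1)) K) ∧ L ∣ (F.2 : MvPolynomial (Fin (r + 1)) K)})
    (hB : B = {F | ¬ LinearIndependent K
      ![(F.1 : MvPolynomial (Fin (r + 1)) K), (F.2 : MvPolynomial (Fin (r + 1)) K)]})
    (hZ : Z = {F | vdimGE r 2
      ![(F.1 : MvPolynomial (Fin (r + 1)) K), (F.2 : MvPolynomial (Fin (r + 1)) K)]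
      ((r : ℤ) - 1)}) :
    IsClosed Z ∧
      {C | Maximal (fun t => t ⊆ Z ∧ IsIrreducible t) C} = {A, B} ∧ A ≠ B := by
  have hr0 : r ≠ 0 := by lia
  change A = commonFactorLocus K r at hA
  change B = dependentLocus K r at hB
  subst hA hB
  rw [setOf_vdimGE_eq_commonFactorLocus_union_dependentLocus hr0] at hZ
  subst hZ
  have hA := isClosed_commonFactorLocus (K := K) (r := r)
  have hB := isClosed_dependentLocus (K := K) (r := r)
  have hAB := not_commonFactorLocus_subset_dependentLocus (K := K) hr0
  have hBA := not_dependentLocus_subset_commonFactorLocus (K := K) hr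
  exact ⟨hA.union hB, setOf_maximal_isIrreducible_union_eq_pair hA hB
    isIrreducible_commonFactorLocus isIrreducible_dependentLocus hAB hBA, fun h => hAB h.subset⟩

end Statement14
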